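/- arXiv:1210.3349 — 3 statements merged into one kernel-verified Lean document; each statement's English description precedes it below -/
import Mathlib

section
/- If p ≥ 3 is prime, p does not divide k, and p divides n, then f_{n,k} ≡ 0 (mod p), where f_{n,k} is the number of k-angulations of a convex n-gon. -/
/-- The `i`-th vertex of the regular `n`-gon inscribed in the unit circle. -/
noncomputable def polygonVertex (n i : ℕ) : ℝ × ℝ :=
  (Real.cos (2 * Real.pi * i / n), Real.sin (2 * Real.pi * i / n))

/-- The convex hull of the vertices of a cell `c ⊆ {0, ..., n-1}`. -/
noncomputable def cellHull (n : ℕ) (c : Finset (Fin n)) : Set (ℝ × ℝ) :=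
  convexHull ℝ ((fun i : Fin n => polygonVertex n i.val) '' (c : Set (Fin n)))

/-- A `k`-angulation of a convex (regular) `n`-gon: a collection of `k`-element vertex
subsets (the `k`-gonal cells) whose convex hulls have pairwise disjoint interiors and
together cover the polygon. -/
def IsKAngulation (n k : ℕ) (S : Finset (Finset (Fin n))) : Prop :=
  (∀ c ∈ S, c.card = k) ∧
  (⋃ c ∈ S, cellHull n c) =
    convexHull ℝ (Set.range fun i : Fin n => polygonVertex n i.val) ∧
  ∀ c ∈ S, ∀ c' ∈ S, c ≠ c' → interior (cellHull n c) ∩ interior (cellHull n c') = ∅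

/-- `f_{n,k}`, the number of `k`-angulations of a convex `n`-gon. -/
noncomputable def numKAngulations (n k : ℕ) : ℕ :=
  Nat.card {S : Finset (Finset (Fin n)) // IsKAngulation n k S}

/-!
Rotation `R` by an element of order `p` of the cyclic group of vertices permutes the
`k`-angulations, so it suffices that it fixes none of them. Suppose it fixes one, and let `c` be a
cell containing the centre `0`. If `R c ≠ c`, a line separates `c` from `R c`; both contain `0`, so
the line is the kernel of a functional `f ≠ 0` with `f ≤ 0` on `c` and `f ∘ R ≥ 0` on `c`. As `0` is
a convex combination of vertices of `c`, some vertex `v` satisfies `f v = f (R v) = 0`; but `v` and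
`R v` span the plane, because `R` has odd order `p` and hence is not `±1`. So `R c = c`, and the `k`
vertices of `c` split into free orbits of size `p`, contradicting `p ∤ k`.
-/

open scoped Pointwise

section PrimeOrderAction

variable {G α : Type*} [AddGroup G] [AddAction G α] {p : ℕ} [Fact p.Prime]

lemma prime_dvd_card_of_forall_vadd_ne {g : G} (hg : p • g = 0) {s : Finset α}
    (hs : ∀ a ∈ s, g +ᵥ a ∈ s) (hfree : ∀ a ∈ s, g +ᵥ a ≠ a) : p ∣ s.card := by
  by_contra hp
  let σ : Equiv.Perm s := (AddAction.toPerm g).subtypePermOfFintype hs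
  have σ_pow (m : ℕ) (a : s) : ((σ ^ m) a : α) = (m • g) +ᵥ (a : α) := by
    induction m with
    | zero => simp
    | succ m ih =>
      rw [pow_succ', Equiv.Perm.mul_apply, succ_nsmul', add_vadd, ← ih]
      rfl
  have hσ : σ ^ p ^ 1 = 1 := by
    ext a
    simp [σ_pow, hg]
  obtain ⟨a, ha⟩ := Equiv.Perm.exists_fixed_point_of_prime (by rwa [Fintype.card_coe]) hσ
  exact hfree a a.2 (congrArg Subtype.val ha)

end PrimeOrderAction

section ConvexHull

lemma exists_eq_zero_of_zero_mem_convexHull {V : Type*} [AddCommGroup V] [Module ℝ V]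
    {s : Set V} {f g : V →ₗ[ℝ] ℝ} (h0 : (0 : V) ∈ convexHull ℝ s)
    (hf : ∀ v ∈ s, f v ≤ 0) (hg : ∀ v ∈ s, 0 ≤ g v) : ∃ v ∈ s, f v = 0 ∧ g v = 0 := by
  obtain ⟨v, hv, hle⟩ : ∃ v ∈ s, (g - f) v ≤ 0 := by
    by_contra! hpos
    have := convexHull_min (t := {v | 0 < (g - f) v}) hpos
      (convex_halfSpace_gt (g - f).isLinear 0) h0
    simp at this
  have hfv := hf v hv
  have hgv := hg v hv
  rw [LinearMap.sub_apply] at hle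
  exact ⟨v, hv, by linarith, by linarith⟩

lemma not_disjoint_interior_convexHull_image {V : Type*} [AddCommGroup V] [Module ℝ V]
    [TopologicalSpace V] [IsTopologicalAddGroup V] [ContinuousSMul ℝ V] {s : Set V}
    (T : V →ₗ[ℝ] V) (hT : ∀ v ∈ s, Submodule.span ℝ {v, T v} = ⊤)
    (h0 : (0 : V) ∈ convexHull ℝ s) (hs : (interior (convexHull ℝ s)).Nonempty)
    (hTs : (interior (convexHull ℝ (T '' s))).Nonempty) :
    ¬ Disjoint (interior (convexHull ℝ s)) (interior (convexHull ℝ (T '' s))) := by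
  intro hdisj
  have hconv : Convex ℝ (convexHull ℝ (T '' s)) := convex_convexHull ℝ _
  have hdisj' : Disjoint (interior (convexHull ℝ s)) (convexHull ℝ (T '' s)) := by
    refine (hdisj.closure_right isOpen_interior).mono_right ?_
    rw [hconv.closure_interior_eq_closure_of_nonempty_interior hTs]
    exact subset_closure
  obtain ⟨f, u, hf, hfs, hfTs⟩ := geometric_hahn_banach_of_nonempty_interior
    (convex_convexHull ℝ s) hconv hdisj' hs (hTs.mono interior_subset)
  have hu : u = 0 := by
    have h0T : (0 : V) ∈ convexHull ℝ (T '' s) :=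
      T.image_convexHull s ▸ ⟨0, h0, map_zero T⟩
    simpa using le_antisymm (hfTs 0 h0T) (hfs 0 h0)
  subst hu
  obtain ⟨v, hv, hfv, hfTv⟩ := exists_eq_zero_of_zero_mem_convexHull
    (f := f.toLinearMap) (g := f.toLinearMap ∘ₗ T) h0
    (fun v hv ↦ hfs v (subset_convexHull ℝ _ hv))
    (fun v hv ↦ hfTs (T v) (subset_convexHull ℝ _ (Set.mem_image_of_mem T hv)))
  have hf0 : f.toLinearMap = 0 := LinearMap.ext_on (hT v hv) <| by
    rintro _ (rfl | rfl)
    exacts [hfv, hfTv]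
  exact hf (ContinuousLinearMap.coe_injective hf0)

lemma interior_convexHull_nonempty_of_cospherical {V : Type*} [NormedAddCommGroup V]
    [InnerProductSpace ℝ V] (hV : Module.finrank ℝ V = 2) {s : Set V}
    (hs : EuclideanGeometry.Cospherical s) {a b c : V} (ha : a ∈ s) (hb : b ∈ s) (hc : c ∈ s)
    (hab : a ≠ b) (hac : a ≠ c) (hbc : b ≠ c) : (interior (convexHull ℝ s)).Nonempty := by
  have : FiniteDimensional ℝ V := .of_finrank_eq_succ hV
  have hind := hs.affineIndependent_of_mem_of_ne ha hb hc hab hac hbc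
  have hspan := hind.affineSpan_eq_top_iff_card_eq_finrank_add_one.2 (by simp [hV])
  rw [interior_convexHull_nonempty_iff_affineSpan_eq_top, eq_top_iff, ← hspan]
  refine affineSpan_mono ℝ ?_
  rintro _ ⟨i, rfl⟩
  fin_cases i <;> assumption

end ConvexHull

lemma span_pair_mul_eq_top {v a : ℂ} (hv : v ≠ 0) (ha : a.im ≠ 0) :
    Submodule.span ℝ {v, a * v} = ⊤ := by
  refine eq_top_iff.2 fun z _ ↦ Submodule.mem_span_pair.2
    ⟨(z / v).re - (z / v).im / a.im * a.re, (z / v).im / a.im, ?_⟩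
  have hz : (((z / v).re - (z / v).im / a.im * a.re : ℝ) : ℂ) + ((z / v).im / a.im : ℝ) * a
      = z / v := by
    apply Complex.ext <;> simp [ha]
  rw [Complex.real_smul, Complex.real_smul, ← mul_assoc, ← add_mul, hz, div_mul_cancel₀ z hv]

lemma im_ne_zero_of_odd_pow_eq_one {z : ℂ} {m : ℕ} (hm : Odd m) (hz : z ^ m = 1) (hz1 : z ≠ 1) :
    z.im ≠ 0 := by
  intro him
  have hre : z = (z.re : ℂ) := Complex.ext rfl him
  have hpow : z.re ^ m = 1 ^ m := by
    rw [hre] at hz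
    exact_mod_cast hz.trans (one_pow m).symm
  exact hz1 (by rw [hre, hm.pow_injective hpow, Complex.ofReal_one])

section CharHull

variable {G : Type*} [AddGroup G] (χ : AddChar G ℂ)

/-- The polygon in the complex plane spanned by the values of the character `χ` on `c`. For `χ`
injective on a finite group these are roots of unity, and translating `c` rotates the polygon. -/
def charHull (c : Finset G) : Set ℂ :=
  convexHull ℝ (χ '' c)

lemma addChar_image_vadd_finset [DecidableEq G] (g : G) (c : Finset G) :
    χ '' (g +ᵥ c : Finset G) = LinearMap.mulLeft ℝ (χ g) '' (χ '' c) := by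
  simp only [Finset.coe_vadd_finset, ← Set.image_vadd, Set.image_image, vadd_eq_add,
    AddChar.map_add_eq_mul, LinearMap.mulLeft_apply]

lemma charHull_vadd [DecidableEq G] (g : G) (c : Finset G) :
    charHull χ (g +ᵥ c) = χ g • charHull χ c := by
  rw [charHull, addChar_image_vadd_finset, ← LinearMap.image_convexHull]
  rfl

lemma interior_charHull_vadd [DecidableEq G] (g : G) (c : Finset G) :
    interior (charHull χ (g +ᵥ c)) = χ g • interior (charHull χ c) := by
  rw [charHull_vadd, interior_smul₀ (χ.val_isUnit g).ne_zero]

variable {χ}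

lemma zero_mem_charHull_univ [Fintype G] (hχ : χ ≠ 1) : 0 ∈ charHull χ Finset.univ := by
  have hsum : ∑ g, (Fintype.card G : ℝ)⁻¹ • χ g = 0 := by
    rw [← Finset.smul_sum, AddChar.sum_eq_zero_of_ne_one hχ, smul_zero]
  rw [← hsum]
  exact (convex_convexHull ℝ _).sum_mem (fun _ _ ↦ by positivity) (by simp) fun g hg ↦
    subset_convexHull ℝ _ (Set.mem_image_of_mem χ (Finset.mem_coe.2 hg))

lemma interior_charHull_nonempty [Finite G] (hχ : Function.Injective χ) {c : Finset G}
    (hc : 2 < c.card) : (interior (charHull χ c)).Nonempty := by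
  have hcosph : EuclideanGeometry.Cospherical (χ '' c) := by
    refine ⟨0, 1, ?_⟩
    rintro _ ⟨g, -, rfl⟩
    rw [dist_zero_right, χ.norm_apply]
  obtain ⟨g₁, h₁, g₂, h₂, g₃, h₃, h₁₂, h₁₃, h₂₃⟩ := Finset.two_lt_card.1 hc
  exact interior_convexHull_nonempty_of_cospherical Complex.finrank_real_complex hcosph
    ⟨g₁, h₁, rfl⟩ ⟨g₂, h₂, rfl⟩ ⟨g₃, h₃, rfl⟩ (hχ.ne h₁₂) (hχ.ne h₁₃) (hχ.ne h₂₃)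

lemma not_disjoint_interior_charHull_vadd [Finite G] [DecidableEq G] (hχ : Function.Injective χ)
    {c : Finset G} (hc : 2 < c.card) (h0 : 0 ∈ charHull χ c) {g : G} (hg : (χ g).im ≠ 0) :
    ¬ Disjoint (interior (charHull χ c)) (interior (charHull χ (g +ᵥ c))) := by
  have hint := interior_charHull_nonempty hχ hc
  have hint' := interior_charHull_nonempty hχ ((Finset.card_vadd_finset g c).symm ▸ hc)
  rw [charHull, addChar_image_vadd_finset] at hint'
  rw [charHull, charHull, addChar_image_vadd_finset]
  refine not_disjoint_interior_convexHull_image _ ?_ h0 hint hint'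
  rintro _ ⟨h, -, rfl⟩
  exact span_pair_mul_eq_top (χ.val_isUnit h).ne_zero hg

end CharHull

section Polygon

variable {n k : ℕ} [NeZero n]

/-- The vertices of the regular `n`-gon as the `n`-th roots of unity `exp (2πi j / n)`, so that the
cyclic shifts of `Fin n` become rotations of `ℂ`. It is `polygonVertex n` under `ℂ ≃ ℝ × ℝ`. -/
noncomputable def polygonChar (n : ℕ) [NeZero n] : AddChar (Fin n) ℂ where
  toFun i := ZMod.stdAddChar (i.val : ZMod n)
  map_zero_eq_one' := by simp
  map_add_eq_mul' i j := by
    rw [Fin.val_add, ZMod.natCast_mod, Nat.cast_add, AddChar.map_add_eq_mul]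

lemma polygonChar_injective : Function.Injective (polygonChar n) := by
  intro i j hij
  have hmod := (ZMod.natCast_eq_natCast_iff' _ _ n).1 (ZMod.injective_stdAddChar hij)
  rwa [Nat.mod_eq_of_lt i.2, Nat.mod_eq_of_lt j.2, ← Fin.ext_iff] at hmod

lemma polygonChar_ne_one_of_ne_zero {i : Fin n} (hi : i ≠ 0) : polygonChar n i ≠ 1 :=
  (polygonChar n).map_zero_eq_one ▸ polygonChar_injective.ne hi

lemma equivRealProd_polygonChar (i : Fin n) :
    Complex.equivRealProdCLM (polygonChar n i) = polygonVertex n i := by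
  have hexp : polygonChar n i = Complex.exp ((2 * Real.pi * i / n : ℝ) * Complex.I) := by
    refine (ZMod.toCircle_natCast i.val).trans (congrArg Complex.exp ?_)
    push_cast
    ring
  rw [hexp]
  exact Prod.ext (Complex.exp_ofReal_mul_I_re _) (Complex.exp_ofReal_mul_I_im _)

lemma image_polygonVertex (s : Set (Fin n)) :
    (fun i ↦ polygonVertex n i.val) '' s = Complex.equivRealProdCLM '' (polygonChar n '' s) := by
  simp only [Set.image_image, equivRealProd_polygonChar]

lemma cellHull_eq_image_charHull (c : Finset (Fin n)) :
    cellHull n c = Complex.equivRealProdCLM '' charHull (polygonChar n) c := by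
  rw [cellHull, image_polygonVertex]
  exact (Complex.equivRealProdCLM.toLinearMap.image_convexHull _).symm

lemma isKAngulation_iff_charHull {S : Finset (Finset (Fin n))} :
    IsKAngulation n k S ↔ (∀ c ∈ S, c.card = k) ∧
      (⋃ c ∈ S, charHull (polygonChar n) c) = charHull (polygonChar n) Finset.univ ∧
      (S : Set (Finset (Fin n))).PairwiseDisjoint
        fun c ↦ interior (charHull (polygonChar n) c) := by
  have hpolygon : convexHull ℝ (Set.range fun i : Fin n ↦ polygonVertex n i.val)
      = cellHull n Finset.univ := by
    rw [cellHull, Finset.coe_univ, Set.image_univ]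
  have hinterior (c : Finset (Fin n)) : interior (cellHull n c)
      = Complex.equivRealProdCLM '' interior (charHull (polygonChar n) c) := by
    rw [cellHull_eq_image_charHull]
    exact (Complex.equivRealProdCLM.toHomeomorph.image_interior _).symm
  have hinj := Complex.equivRealProdCLM.injective
  simp_rw [IsKAngulation, hpolygon, hinterior, cellHull_eq_image_charHull, ← Set.image_iUnion₂,
    hinj.image_injective.eq_iff, ← Set.disjoint_iff_inter_eq_empty, Set.disjoint_image_iff hinj,
    Set.PairwiseDisjoint, Set.Pairwise, Finset.mem_coe]

namespace IsKAngulation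

variable {S : Finset (Finset (Fin n))}

lemma vadd (hS : IsKAngulation n k S) (j : Fin n) : IsKAngulation n k (j +ᵥ S) := by
  obtain ⟨hcard, hcover, hdisj⟩ := isKAngulation_iff_charHull.1 hS
  refine isKAngulation_iff_charHull.2 ⟨?_, ?_, ?_⟩
  · rintro _ hjc
    obtain ⟨c, hc, rfl⟩ := Finset.mem_vadd_finset.1 hjc
    rw [Finset.card_vadd_finset, hcard c hc]
  · simp_rw [← Finset.mem_coe, Finset.coe_vadd_finset, ← Set.image_vadd, Set.biUnion_image,
      charHull_vadd, Finset.mem_coe, ← Set.smul_set_iUnion₂, hcover, ← charHull_vadd,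
      Finset.vadd_finset_univ]
  · rw [Finset.coe_vadd_finset, ← Set.image_vadd,
      (AddAction.injective j).injOn.pairwiseDisjoint_image]
    intro c hc c' hc' hne
    simp only [Function.onFun, Function.comp, interior_charHull_vadd]
    have hj := mul_right_injective₀ ((polygonChar n).val_isUnit j).ne_zero
    exact (Set.disjoint_image_iff hj).2 (hdisj hc hc' hne)

lemma exists_zero_mem_charHull (hS : IsKAngulation n k S) (hn : 1 < n) :
    ∃ c ∈ S, 0 ∈ charHull (polygonChar n) c := by
  have : Nontrivial (Fin n) := Fin.nontrivial_iff_two_le.2 hn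
  obtain ⟨i, hi⟩ := exists_ne (0 : Fin n)
  have hχ : polygonChar n ≠ 1 := AddChar.ne_one_iff.2 ⟨i, polygonChar_ne_one_of_ne_zero hi⟩
  have h0 := zero_mem_charHull_univ hχ
  rw [← (isKAngulation_iff_charHull.1 hS).2.1] at h0
  simpa using h0

lemma vadd_eq_of_zero_mem_charHull (hS : IsKAngulation n k S) (hk : 2 < k) {j : Fin n}
    (hj : (polygonChar n j).im ≠ 0) (hjS : j +ᵥ S = S) {c : Finset (Fin n)} (hc : c ∈ S)
    (h0 : 0 ∈ charHull (polygonChar n) c) : j +ᵥ c = c := by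
  obtain ⟨hcard, -, hdisj⟩ := isKAngulation_iff_charHull.1 hS
  by_contra hne
  have hjc : j +ᵥ c ∈ S := hjS ▸ Finset.vadd_mem_vadd_finset hc
  exact not_disjoint_interior_charHull_vadd polygonChar_injective (hcard c hc ▸ hk) h0 hj
    (hdisj hc hjc (Ne.symm hne))

end IsKAngulation

end Polygon

/-- If `p ≥ 3` is prime, `p ∤ k` and `p ∣ n`, then `f_{n,k} ≡ 0 (mod p)`. -/
theorem numKAngulations_mod_p (n k p : ℕ) (hn : 3 ≤ n) (hk : 3 ≤ k)
    (hp : p.Prime) (hp3 : 3 ≤ p) (hpk : ¬ p ∣ k) (hpn : p ∣ n) :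
    p ∣ numKAngulations n k := by
  classical
  have : NeZero n := ⟨by omega⟩
  have : Fact p.Prime := ⟨hp⟩
  obtain ⟨j, hj⟩ := exists_prime_addOrderOf_dvd_card (G := Fin n) p (by rwa [Fintype.card_fin])
  have hpj : p • j = 0 := hj ▸ addOrderOf_nsmul_eq_zero j
  have hj0 : j ≠ 0 := by
    rintro rfl
    exact hp.one_lt.ne' (hj.symm.trans addOrderOf_zero)
  have him : (polygonChar n j).im ≠ 0 :=
    im_ne_zero_of_odd_pow_eq_one (hp.odd_of_ne_two (by omega))
      (by rw [← AddChar.map_nsmul_eq_pow, hpj, AddChar.map_zero_eq_one])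
      (polygonChar_ne_one_of_ne_zero hj0)
  rw [numKAngulations, Nat.card_eq_fintype_card, Fintype.card_subtype]
  refine prime_dvd_card_of_forall_vadd_ne hpj (by simpa using fun S hS ↦ hS.vadd j) ?_
  intro S hS hjS
  rw [Finset.mem_filter_univ] at hS
  obtain ⟨c, hc, h0⟩ := hS.exists_zero_mem_charHull (by omega)
  have hjc : j +ᵥ c = c := hS.vadd_eq_of_zero_mem_charHull hk him hjS hc h0
  apply hpk
  rw [← hS.1 c hc]
  exact prime_dvd_card_of_forall_vadd_ne hpj
    (fun i hi ↦ hjc ▸ Finset.vadd_mem_vadd_finset hi) (fun i _ ↦ by simpa using hj0)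
end

section
/- The number of triangulations of a convex n-gon whose central component contains the vertex 0 equals C_{n-2} - ∑_{m=1}^{⌊n/2⌋ - 1} C_m * C_{n-2-m}. -/
/-!
Rooting a triangulation at the side `{0, n - 1}` encodes it as a binary tree with `n - 2` nodes, one
for each triangle. The triangles at the vertex `0` form the left spine, and the sides opposite `0`
cut off the right subtrees hanging off that spine. The central component avoids `0` exactly when
one of these pieces covers at least half of the polygon, that is, has at least `⌊(n - 1) / 2⌋`
triangles; the tree has room for at most one such piece.

It therefore suffices to count spine pieces over all trees. Give a piece of size `s` the weight
`f s`, let `A` be the generating function of the total weight, `C` that of the Catalan numbers, and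
`F = ∑ C_s f(s) X ^ s`. Splitting at the root gives `A = X (A C + C F)`, which together with
`C = 1 + X C ^ 2` yields `A + F = C F`: the total weight over trees with `m` nodes is
`∑_{1 ≤ x ≤ m} C_x C_{m-x} f(m-x)`.
-/

/-- A diagonal of a convex `n`-gon with vertices `0, 1, ..., n-1`, encoded as a pair
`(a, b)` with `a < b`, joining two non-adjacent vertices. -/
def IsDiagonal (n : ℕ) (d : ℕ × ℕ) : Prop :=
  d.2 < n ∧ d.1 + 2 ≤ d.2 ∧ d.2 + 2 ≤ d.1 + n

/-- Two diagonals (each encoded as an increasing pair) cross in the interior of the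
polygon. -/
def Crossing (d e : ℕ × ℕ) : Prop :=
  (d.1 < e.1 ∧ e.1 < d.2 ∧ d.2 < e.2) ∨ (e.1 < d.1 ∧ d.1 < e.2 ∧ e.2 < d.2)

/-- A triangulation of a convex `n`-gon: a set of `n - 3` pairwise non-crossing
diagonals. -/
def IsTriangulation (n : ℕ) (T : Finset (ℕ × ℕ)) : Prop :=
  T.card = n - 3 ∧ (∀ d ∈ T, IsDiagonal n d) ∧
    ∀ d ∈ T, ∀ e ∈ T, d ≠ e → ¬ Crossing d e

/-- The central component of the triangulation `T` (the diameter or triangle containing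
the center of the regular `n`-gon) does not contain the vertex `0`: some diagonal of `T`
separates vertex `0` from the center, i.e. there is a diagonal `(a, b)` with `a ≥ 1`
whose cyclic length `b - a` is at least `n/2`. -/
def CentralAvoidsZero (n : ℕ) (T : Finset (ℕ × ℕ)) : Prop :=
  ∃ d ∈ T, 1 ≤ d.1 ∧ n ≤ 2 * (d.2 - d.1)

/-- A pair of non-adjacent vertices of the polygon with vertices `a, a + 1, ..., b`. The closing
side `(a, b)` is included: it becomes a chord as soon as the polygon is glued into a larger one. -/
def IsChord (a b : ℕ) (d : ℕ × ℕ) : Prop :=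
  a ≤ d.1 ∧ d.1 + 2 ≤ d.2 ∧ d.2 ≤ b

/-- A dissection of the polygon with vertices `a, a + 1, ..., b`: a set of non-crossing chords,
possibly containing the closing side `(a, b)`. -/
structure IsDissection (a b : ℕ) (S : Finset (ℕ × ℕ)) : Prop where
  isChord : ∀ d ∈ S, IsChord a b d
  noncrossing : ∀ d ∈ S, ∀ e ∈ S, ¬ Crossing d e

namespace IsDissection

variable {a b k : ℕ} {S S' : Finset (ℕ × ℕ)}

theorem eq_empty (h : IsDissection a b S) (hab : b < a + 2) : S = ∅ := by
  refine Finset.eq_empty_of_forall_notMem fun d hd => ?_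
  have := h.isChord d hd
  grind [IsChord]

theorem glue (h : IsDissection a k S) (h' : IsDissection k b S') (hak : a < k) (hkb : k < b) :
    IsDissection a b (insert (a, b) (S ∪ S')) where
  isChord d hd := by
    have := h.isChord d
    have := h'.isChord d
    grind [IsChord]
  noncrossing d hd e he := by
    have := h.isChord d
    have := h'.isChord d
    have := h.isChord e
    have := h'.isChord e
    have := h.noncrossing d
    have := h'.noncrossing d
    grind [IsChord, Crossing]

theorem card_glue (h : IsDissection a k S) (h' : IsDissection k b S') (hak : a < k)
    (hkb : k < b) : (insert (a, b) (S ∪ S')).card = S.card + S'.card + 1 := by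
  have hdisj : Disjoint S S' := Finset.disjoint_left.2 fun d hd hd' => by
    have := h.isChord d hd
    have := h'.isChord d hd'
    grind [IsChord]
  have hnot : (a, b) ∉ S ∪ S' := fun hmem => by
    have := h.isChord (a, b)
    have := h'.isChord (a, b)
    grind [IsChord]
  rw [Finset.card_insert_of_notMem hnot, Finset.card_union_of_disjoint hdisj]

theorem filter_glue_left (h : IsDissection a k S) (h' : IsDissection k b S') (hkb : k < b) :
    (insert (a, b) (S ∪ S')).filter (·.2 ≤ k) = S := by
  ext d
  have := h.isChord d
  have := h'.isChord d
  grind [IsChord]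

theorem filter_glue_right (h : IsDissection a k S) (h' : IsDissection k b S') (hak : a < k) :
    (insert (a, b) (S ∪ S')).filter (k ≤ ·.1) = S' := by
  ext d
  have := h.isChord d
  have := h'.isChord d
  grind [IsChord]

theorem filter_left (h : IsDissection a b S) (k : ℕ) :
    IsDissection a k (S.filter (·.2 ≤ k)) where
  isChord d hd := by
    have := h.isChord d
    grind [IsChord]
  noncrossing d hd e he :=
    h.noncrossing d (Finset.mem_of_mem_filter d hd) e (Finset.mem_of_mem_filter e he)

theorem filter_right (h : IsDissection a b S) (k : ℕ) :
    IsDissection k b (S.filter (k ≤ ·.1)) where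
  isChord d hd := by
    have := h.isChord d
    grind [IsChord]
  noncrossing d hd e he :=
    h.noncrossing d (Finset.mem_of_mem_filter d hd) e (Finset.mem_of_mem_filter e he)

-- The apex is the far end of the longest chord at `a` other than `(a, b)`, or `a + 1` if none.
theorem exists_apex (h : IsDissection a b S) (hab : a + 2 ≤ b) :
    ∃ k, a < k ∧ k < b ∧ S.erase (a, b) = S.filter (·.2 ≤ k) ∪ S.filter (k ≤ ·.1) := by
  suffices ∃ k, a < k ∧ k < b ∧ ∀ d ∈ S.erase (a, b), d.2 ≤ k ∨ k ≤ d.1 by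
    obtain ⟨k, hak, hkb, hk⟩ := this
    refine ⟨k, hak, hkb, ?_⟩
    ext d
    grind
  rcases ((S.erase (a, b)).filter (·.1 = a)).eq_empty_or_nonempty with hempty | hne
  · refine ⟨a + 1, by omega, by omega, fun d hd => Or.inr ?_⟩
    have hda : d.1 ≠ a := Finset.filter_eq_empty_iff.1 hempty hd
    have := (h.isChord d (Finset.mem_of_mem_erase hd)).1
    omega
  · obtain ⟨⟨x, k⟩, hk, hmax⟩ := Finset.exists_max_image _ Prod.snd hne
    obtain ⟨hkS, rfl⟩ := Finset.mem_filter.1 hk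
    have hchord := h.isChord _ (Finset.mem_of_mem_erase hkS)
    refine ⟨k, by grind [IsChord], by grind [IsChord], fun d hd => ?_⟩
    have := h.isChord d (Finset.mem_of_mem_erase hd)
    have := h.noncrossing _ (Finset.mem_of_mem_erase hkS) d (Finset.mem_of_mem_erase hd)
    grind [IsChord, Crossing]

theorem card_le {a b : ℕ} {S : Finset (ℕ × ℕ)} (h : IsDissection a b S) :
    S.card ≤ b - a - 1 := by
  rcases lt_or_ge b (a + 2) with hab | hab
  · simp [h.eq_empty hab]
  · obtain ⟨k, hak, hkb, hS⟩ := h.exists_apex hab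
    have hleft := (h.filter_left k).card_le
    have hright := (h.filter_right k).card_le
    have hunion := Finset.card_union_le (S.filter (·.2 ≤ k)) (S.filter (k ≤ ·.1))
    have herase := Finset.pred_card_le_card_erase (s := S) (a := (a, b))
    rw [hS] at herase
    omega
termination_by b - a

end IsDissection

/-- The chords, closing side included, of the triangulation encoded by a binary tree `t` of the
polygon with vertices `a, ..., a + t.numNodes + 1`. The root is the triangle on the closing side,
and its two subtrees encode the polygons cut off by the other two sides of that triangle. -/
def chords : BinaryTree Unit → ℕ → Finset (ℕ × ℕ)
  | .nil, _ => ∅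
  | .node _ l r, a =>
      insert (a, a + (l.numNodes + r.numNodes + 1) + 1)
        (chords l a ∪ chords r (a + l.numNodes + 1))

theorem closing_side_mem_chords {t : BinaryTree Unit} (ht : t ≠ .nil) (a : ℕ) :
    (a, a + t.numNodes + 1) ∈ chords t a := by
  cases t with
  | nil => contradiction
  | node _ l r => exact Finset.mem_insert_self _ _

theorem isDissection_chords (t : BinaryTree Unit) (a : ℕ) :
    IsDissection a (a + t.numNodes + 1) (chords t a) := by
  induction t generalizing a with
  | nil => constructor <;> simp [chords]
  | node _ l r hl hr =>
    have hr := hr (a + l.numNodes + 1)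
    rw [show a + l.numNodes + 1 + r.numNodes + 1 = a + (l.numNodes + r.numNodes + 1) + 1
      by omega] at hr
    rw [chords, BinaryTree.numNodes]
    exact (hl a).glue hr (by omega) (by omega)

theorem isDissection_chords_right (l r : BinaryTree Unit) (a : ℕ) :
    IsDissection (a + l.numNodes + 1) (a + (l.numNodes + r.numNodes + 1) + 1)
      (chords r (a + l.numNodes + 1)) := by
  convert isDissection_chords r (a + l.numNodes + 1) using 1
  omega

theorem card_chords (t : BinaryTree Unit) (a : ℕ) : (chords t a).card = t.numNodes := by
  induction t generalizing a with
  | nil => rfl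
  | node _ l r hl hr =>
    rw [chords, (isDissection_chords l a).card_glue (isDissection_chords_right l r a)
      (by omega) (by omega), hl, hr, BinaryTree.numNodes]

theorem filter_chords_left (u : Unit) (l r : BinaryTree Unit) (a : ℕ) :
    (chords (.node u l r) a).filter (·.2 ≤ a + l.numNodes + 1) = chords l a :=
  (isDissection_chords l a).filter_glue_left (isDissection_chords_right l r a) (by omega)

theorem filter_chords_right (u : Unit) (l r : BinaryTree Unit) (a : ℕ) :
    (chords (.node u l r) a).filter (a + l.numNodes + 1 ≤ ·.1) =
      chords r (a + l.numNodes + 1) :=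
  (isDissection_chords l a).filter_glue_right (isDissection_chords_right l r a) (by omega)

-- If the left subtree of the second tree were larger, the closing side of `r` would cross the
-- triangle at the root of the second tree.
theorem numNodes_left_le_of_chords_eq {u u' : Unit} {l r l' r' : BinaryTree Unit} {a : ℕ}
    (h : chords (.node u l r) a = chords (.node u' l' r') a) : l'.numNodes ≤ l.numNodes := by
  by_contra! hlt
  have hn : l.numNodes + r.numNodes + 1 = l'.numNodes + r'.numNodes + 1 := by
    simpa only [card_chords, BinaryTree.numNodes] using congrArg Finset.card h
  have hr : r ≠ .nil := by
    rintro rfl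
    simp only [BinaryTree.numNodes] at hn
    omega
  have hmem : (a + l.numNodes + 1, a + l.numNodes + 1 + r.numNodes + 1) ∈
      chords (.node u' l' r') a := by
    have := closing_side_mem_chords hr (a + l.numNodes + 1)
    rw [← filter_chords_right u, h] at this
    exact Finset.mem_of_mem_filter _ this
  rw [chords, Finset.mem_insert, Finset.mem_union] at hmem
  rcases hmem with heq | hmem | hmem
  · grind
  · have := (isDissection_chords l' a).isChord _ hmem
    grind [IsChord]
  · have := (isDissection_chords_right l' r' a).isChord _ hmem
    grind [IsChord]

theorem chords_injective (a : ℕ) : Function.Injective (chords · a) := by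
  intro t
  induction t generalizing a with
  | nil =>
    intro t' h
    have hcard := congrArg Finset.card h
    simp only [card_chords] at hcard
    cases t' with
    | nil => rfl
    | node => simp [BinaryTree.numNodes] at hcard
  | node u l r hl hr =>
    intro t' h
    cases t' with
    | nil => exact absurd h (Finset.insert_ne_empty _ _)
    | node u' l' r' =>
      have hn : l.numNodes = l'.numNodes :=
        le_antisymm (numNodes_left_le_of_chords_eq h.symm) (numNodes_left_le_of_chords_eq h)
      have hleft : chords l a = chords l' a := by
        rw [← filter_chords_left u l r, ← filter_chords_left u' l' r', hn]
        exact congrArg _ h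
      have hright : chords r (a + l.numNodes + 1) = chords r' (a + l.numNodes + 1) := by
        rw [← filter_chords_right u l r, hn, ← filter_chords_right u' l' r']
        exact congrArg _ h
      rw [hl a hleft, hr _ hright]

theorem IsDissection.exists_chords_eq {a b : ℕ} {S : Finset (ℕ × ℕ)} (h : IsDissection a b S)
    (hS : a + S.card + 1 = b) : ∃ t, chords t a = S := by
  rcases lt_or_ge b (a + 2) with hab | hab
  · exact ⟨.nil, (h.eq_empty hab).symm⟩
  · obtain ⟨k, hak, hkb, hk⟩ := h.exists_apex hab
    have hleft := (h.filter_left k).card_le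
    have hright := (h.filter_right k).card_le
    have hunion := Finset.card_union_le (S.filter (·.2 ≤ k)) (S.filter (k ≤ ·.1))
    rw [← hk] at hunion
    have herase := Finset.pred_card_le_card_erase (s := S) (a := (a, b))
    have hmem : (a, b) ∈ S := by
      by_contra hnot
      rw [Finset.erase_eq_of_notMem hnot] at hunion
      omega
    obtain ⟨l, hl⟩ := (h.filter_left k).exists_chords_eq (by omega)
    obtain ⟨r, hr⟩ := (h.filter_right k).exists_chords_eq (by omega)
    have hnl : l.numNodes = (S.filter (·.2 ≤ k)).card := by rw [← hl, card_chords]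
    have hnr : r.numNodes = (S.filter (k ≤ ·.1)).card := by rw [← hr, card_chords]
    refine ⟨.node () l r, ?_⟩
    rw [chords, show a + l.numNodes + 1 = k by omega,
      show a + (l.numNodes + r.numNodes + 1) + 1 = b by omega, hl, hr, ← hk,
      Finset.insert_erase hmem]
termination_by b - a

/-- The triangulation, in the sense of `IsTriangulation`, of the `(t.numNodes + 2)`-gon encoded
by a binary tree `t`: its chords without the closing side. -/
def diagonals (t : BinaryTree Unit) : Finset (ℕ × ℕ) :=
  (chords t 0).erase (0, t.numNodes + 1)

theorem insert_diagonals {t : BinaryTree Unit} (ht : t ≠ .nil) :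
    insert (0, t.numNodes + 1) (diagonals t) = chords t 0 :=
  Finset.insert_erase (by simpa using closing_side_mem_chords ht 0)

theorem isTriangulation_diagonals {t : BinaryTree Unit} (ht : t ≠ .nil) :
    IsTriangulation (t.numNodes + 2) (diagonals t) := by
  have h := isDissection_chords t 0
  refine ⟨?_, fun d hd => ?_, fun d hd e he _ =>
    h.noncrossing d (Finset.mem_of_mem_erase hd) e (Finset.mem_of_mem_erase he)⟩
  · have hmem := closing_side_mem_chords ht 0
    rw [zero_add] at hmem
    rw [diagonals, Finset.card_erase_of_mem hmem, card_chords]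
    omega
  · have := h.isChord d (Finset.mem_of_mem_erase hd)
    have := Finset.ne_of_mem_erase hd
    grind [IsChord, IsDiagonal]

theorem IsTriangulation.isDissection_insert {n : ℕ} {T : Finset (ℕ × ℕ)} (hn : 3 ≤ n)
    (hT : IsTriangulation n T) : IsDissection 0 (n - 1) (insert (0, n - 1) T) where
  isChord d hd := by
    have := hT.2.1 d
    grind [IsChord, IsDiagonal]
  noncrossing d hd e he := by
    have := hT.2.1 d
    have := hT.2.1 e
    have := hT.2.2 d
    grind [IsDiagonal, Crossing]

theorem IsTriangulation.exists_diagonals_eq {n : ℕ} {T : Finset (ℕ × ℕ)} (hn : 3 ≤ n)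
    (hT : IsTriangulation n T) : ∃ t : BinaryTree Unit, t.numNodes = n - 2 ∧ diagonals t = T := by
  have hnot : (0, n - 1) ∉ T := fun hmem => by
    have := hT.2.1 _ hmem
    grind [IsDiagonal]
  have hcard : (insert (0, n - 1) T).card = n - 2 := by
    rw [Finset.card_insert_of_notMem hnot, hT.1]
    omega
  obtain ⟨t, ht⟩ := (hT.isDissection_insert hn).exists_chords_eq (by omega)
  have hnum : t.numNodes = n - 2 := by rw [← hcard, ← ht, card_chords]
  refine ⟨t, hnum, ?_⟩
  rw [diagonals, ht, hnum, show n - 2 + 1 = n - 1 by omega, Finset.erase_insert hnot]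

theorem bijOn_diagonals {n : ℕ} (hn : 3 ≤ n) :
    Set.BijOn diagonals {t | t.numNodes = n - 2} {T | IsTriangulation n T} := by
  have ne_nil {t : BinaryTree Unit} (ht : t.numNodes = n - 2) : t ≠ .nil := by
    rintro rfl
    simp only [BinaryTree.numNodes] at ht
    omega
  refine ⟨fun t ht => ?_, fun t ht t' ht' h => ?_, fun T hT => hT.exists_diagonals_eq hn⟩
  · have := isTriangulation_diagonals (ne_nil ht)
    rwa [show t.numNodes + 2 = n by grind] at this
  · apply chords_injective 0
    simp only
    rw [← insert_diagonals (ne_nil ht), h, ht, ← ht', insert_diagonals (ne_nil ht')]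

theorem card_isTriangulation_and {n : ℕ} (hn : 3 ≤ n) (p : Finset (ℕ × ℕ) → Prop)
    [DecidablePred fun t => p (diagonals t)] :
    Nat.card {T // IsTriangulation n T ∧ p T} =
      ((BinaryTree.treesOfNumNodesEq (n - 2)).filter fun t => p (diagonals t)).card := by
  have himage : {T | IsTriangulation n T ∧ p T} =
      diagonals '' ({t | t.numNodes = n - 2} ∩ diagonals ⁻¹' {T | p T}) := by
    rw [Set.image_inter_preimage, (bijOn_diagonals hn).image_eq]
    rfl
  have hfilter : ({t | t.numNodes = n - 2} ∩ diagonals ⁻¹' {T | p T} : Set (BinaryTree Unit)) =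
      (BinaryTree.treesOfNumNodesEq (n - 2)).filter fun t => p (diagonals t) := by
    ext t
    simp
  rw [← Set.ncard_coe_finset, ← hfilter,
    ← ((bijOn_diagonals hn).injOn.mono Set.inter_subset_left).ncard_image, ← himage]
  rfl

/-- The sizes of the right subtrees hanging off the left spine of a binary tree. In the
triangulation encoded by the tree, these subtrees are the pieces cut off by the sides opposite `0`
of the triangles at the vertex `0`. -/
def spineSizes : BinaryTree Unit → List ℕ
  | .nil => []
  | .node _ l r => r.numNodes :: spineSizes l

theorem sum_spineSizes_add_length (t : BinaryTree Unit) :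
    (spineSizes t).sum + (spineSizes t).length = t.numNodes := by
  induction t with
  | nil => rfl
  | node _ l r hl _ =>
    simp only [spineSizes, List.sum_cons, List.length_cons, BinaryTree.numNodes]
    omega

theorem exists_long_chord_iff {k : ℕ} (hk : 1 ≤ k) (t : BinaryTree Unit) (a : ℕ) :
    (∃ d ∈ chords t a, a < d.1 ∧ k < d.2 - d.1) ↔ ∃ s ∈ spineSizes t, k ≤ s := by
  induction t with
  | nil => simp [chords, spineSizes]
  | node _ l r hl _ =>
    have hright : (∃ d ∈ chords r (a + l.numNodes + 1), a < d.1 ∧ k < d.2 - d.1) ↔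
        k ≤ r.numNodes := by
      constructor
      · rintro ⟨d, hd, -, hlong⟩
        have := (isDissection_chords r _).isChord d hd
        grind [IsChord]
      · intro hkr
        have hr : r ≠ .nil := by
          rintro rfl
          exact absurd (hk.trans hkr) (by simp)
        exact ⟨_, closing_side_mem_chords hr _, by grind, by grind⟩
    simp only [chords, spineSizes, Finset.mem_insert, Finset.mem_union, List.mem_cons,
      or_and_right, exists_or, exists_eq_left, lt_irrefl, false_and, false_or, hl, hright]
    exact or_comm

theorem centralAvoidsZero_diagonals_iff {n : ℕ} (hn : 3 ≤ n) (t : BinaryTree Unit) :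
    CentralAvoidsZero n (diagonals t) ↔ ∃ s ∈ spineSizes t, (n - 1) / 2 ≤ s := by
  rw [← exists_long_chord_iff (by omega) t 0]
  refine exists_congr fun d => ?_
  grind [diagonals]

theorem sum_map_ite_le_eq_ite_exists {k : ℕ} {s : List ℕ} (hs : s.sum + s.length ≤ 2 * k + 1) :
    (s.map fun x => if k ≤ x then 1 else 0).sum = if ∃ x ∈ s, k ≤ x then 1 else 0 := by
  induction s with
  | nil => simp
  | cons x s ih =>
    rw [List.sum_cons, List.length_cons] at hs
    rw [List.map_cons, List.sum_cons, ih (by omega)]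
    by_cases hx : k ≤ x
    · have hnone : ¬ ∃ y ∈ s, k ≤ y := by
        rintro ⟨y, hy, hky⟩
        have hsum : y ≤ s.sum := List.le_sum_of_mem hy
        have hlength := List.length_pos_of_mem hy
        omega
      simp [hx, hnone]
    · simp [hx]

theorem sum_treesOfNumNodesEq_succ {M : Type*} [AddCommMonoid M] (m : ℕ)
    (f : BinaryTree Unit → M) :
    ∑ t ∈ BinaryTree.treesOfNumNodesEq (m + 1), f t =
      ∑ ij ∈ Finset.HasAntidiagonal.antidiagonal m, ∑ l ∈ BinaryTree.treesOfNumNodesEq ij.1,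
        ∑ r ∈ BinaryTree.treesOfNumNodesEq ij.2, f (.node () l r) := by
  have hdisj : (Finset.HasAntidiagonal.antidiagonal m : Set (ℕ × ℕ)).PairwiseDisjoint fun ij =>
      BinaryTree.pairwiseNode (BinaryTree.treesOfNumNodesEq ij.1)
        (BinaryTree.treesOfNumNodesEq ij.2) := by
    intro x _ y _ hxy
    refine Finset.disjoint_left.2 fun t hx hy => hxy ?_
    simp only [BinaryTree.pairwiseNode, Finset.mem_map, Finset.mem_product,
      BinaryTree.mem_treesOfNumNodesEq] at hx hy
    obtain ⟨⟨l, r⟩, ⟨hl, hr⟩, rfl⟩ := hx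
    obtain ⟨⟨l', r'⟩, ⟨hl', hr'⟩, heq⟩ := hy
    obtain ⟨-, rfl, rfl⟩ := BinaryTree.node.inj heq
    exact Prod.ext (hl.symm.trans hl') (hr.symm.trans hr')
  rw [BinaryTree.treesOfNumNodesEq_succ, Finset.sum_biUnion hdisj]
  refine Finset.sum_congr rfl fun ij _ => ?_
  rw [BinaryTree.pairwiseNode, Finset.sum_map, Finset.sum_product]
  rfl

open PowerSeries

/-- The generating function of the total weight of the spine sizes of all binary trees, a piece
of size `s` having weight `f s`. -/
noncomputable def spineSeries (f : ℕ → ℕ) : ℕ⟦X⟧ :=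
  mk fun m => ∑ t ∈ BinaryTree.treesOfNumNodesEq m, ((spineSizes t).map f).sum

theorem spineSeries_eq (f : ℕ → ℕ) :
    spineSeries f = X * (spineSeries f * catalanSeries +
      catalanSeries * mk fun s => catalan s * f s) := by
  ext m
  cases m with
  | zero => simp [spineSeries, spineSizes]
  | succ m =>
    rw [coeff_succ_X_mul, map_add, coeff_mul, coeff_mul, ← Finset.sum_add_distrib, spineSeries,
      coeff_mk, sum_treesOfNumNodesEq_succ]
    refine Finset.sum_congr rfl fun ij _ => ?_
    have hweight : ∀ l : BinaryTree Unit, ∀ r ∈ BinaryTree.treesOfNumNodesEq ij.2,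
        ((spineSizes (.node () l r)).map f).sum = f ij.2 + ((spineSizes l).map f).sum := by
      intro l r hr
      rw [spineSizes, List.map_cons, List.sum_cons, BinaryTree.mem_treesOfNumNodesEq.1 hr]
    rw [Finset.sum_congr rfl fun l _ => Finset.sum_congr rfl (hweight l)]
    simp only [coeff_mk, catalanSeries_coeff, Finset.sum_const, smul_eq_mul,
      BinaryTree.treesOfNumNodesEq_card_eq_catalan, mul_add, Finset.sum_add_distrib,
      ← Finset.mul_sum]
    ring

theorem spineSeries_add_eq_catalanSeries_mul (f : ℕ → ℕ) :
    spineSeries f + mk (fun s => catalan s * f s) =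
      catalanSeries * mk fun s => catalan s * f s := by
  set A := spineSeries f
  set C := catalanSeries
  set F : ℕ⟦X⟧ := mk fun s => catalan s * f s
  have hA : A = X * (A * C + C * F) := spineSeries_eq f
  have hC : C ^ 2 * X + 1 = C := catalanSeries_sq_mul_X_add_one
  have h : A + F + A * (C ^ 2 * X) = C * F + A * (C ^ 2 * X) := calc
    _ = A * (C ^ 2 * X + 1) + F := by ring
    _ = X * (A * C + C * F) * C + F := by rw [hC, ← hA]
    _ = (C ^ 2 * X + 1) * F + A * (C ^ 2 * X) := by ring
    _ = C * F + A * (C ^ 2 * X) := by rw [hC]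
  ext m
  simpa using congrArg (coeff m) h

theorem sum_sum_map_spineSizes (f : ℕ → ℕ) (m : ℕ) :
    ∑ t ∈ BinaryTree.treesOfNumNodesEq m, ((spineSizes t).map f).sum =
      ∑ x ∈ Finset.Icc 1 m, catalan x * (catalan (m - x) * f (m - x)) := by
  have hcoeff := congrArg (coeff m) (spineSeries_add_eq_catalanSeries_mul f)
  rw [map_add, coeff_mul, Finset.Nat.sum_antidiagonal_eq_sum_range_succ_mk,
    Finset.range_eq_Ico, Finset.sum_eq_sum_Ico_succ_bot (by omega)] at hcoeff
  simp only [spineSeries, coeff_mk, catalanSeries_coeff, catalan_zero, one_mul, Nat.sub_zero,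
    zero_add, Nat.succ_eq_add_one, Finset.Ico_add_one_right_eq_Icc] at hcoeff
  omega

theorem card_exists_le_spineSizes {k m : ℕ} (hm : m ≤ 2 * k + 1) :
    ((BinaryTree.treesOfNumNodesEq m).filter fun t => ∃ s ∈ spineSizes t, k ≤ s).card =
      ∑ x ∈ Finset.Icc 1 (m - k), catalan x * catalan (m - x) := by
  have hindicator : ∀ t ∈ BinaryTree.treesOfNumNodesEq m,
      (if ∃ s ∈ spineSizes t, k ≤ s then 1 else 0) =
        ((spineSizes t).map fun s => if k ≤ s then 1 else 0).sum := by
    intro t ht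
    rw [BinaryTree.mem_treesOfNumNodesEq] at ht
    exact (sum_map_ite_le_eq_ite_exists (by rwa [sum_spineSizes_add_length, ht])).symm
  have hrange : (Finset.Icc 1 m).filter (fun x => k ≤ m - x) = Finset.Icc 1 (m - k) := by
    grind
  rw [Finset.card_filter, Finset.sum_congr rfl hindicator, sum_sum_map_spineSizes, ← hrange,
    Finset.sum_filter]
  simp only [mul_ite, mul_one, mul_zero]

/-- The number of triangulations of a convex `n`-gon whose central component contains
the vertex `0` equals `C_{n-2} - ∑_{m=1}^{⌊n/2⌋-1} C_m C_{n-2-m}`. -/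
theorem card_central_contains_zero (n : ℕ) (hn : 3 ≤ n) :
    Nat.card {T : Finset (ℕ × ℕ) // IsTriangulation n T ∧ ¬ CentralAvoidsZero n T} =
      catalan (n - 2) - ∑ m ∈ Finset.Icc 1 (n / 2 - 1), catalan m * catalan (n - 2 - m) := by
  classical
  have havoid : ((BinaryTree.treesOfNumNodesEq (n - 2)).filter
      fun t => CentralAvoidsZero n (diagonals t)).card =
        ∑ m ∈ Finset.Icc 1 (n / 2 - 1), catalan m * catalan (n - 2 - m) := by
    simp_rw [centralAvoidsZero_diagonals_iff hn]
    rw [card_exists_le_spineSizes (by omega), show n - 2 - (n - 1) / 2 = n / 2 - 1 by omega]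
  have hpartition := Finset.card_filter_add_card_filter_not
    (s := BinaryTree.treesOfNumNodesEq (n - 2)) fun t => CentralAvoidsZero n (diagonals t)
  rw [havoid, BinaryTree.treesOfNumNodesEq_card_eq_catalan] at hpartition
  rw [card_isTriangulation_and hn, ← hpartition, Nat.add_sub_cancel_left]
end

section
/- For all n ≥ 2, Q_n = (n+1) * Q_{n/2}^2 + ∑ m_{ijkl} * Q_{(i-1)/2} * Q_{(j-1)/2} * Q_{(k-1)/2} * Q_{(l-1)/2}, where the sum is over quadruples (i,j,k,l) of positive integers with i + j + k + l = 2n + 2 and i ≤ j ≤ k ≤ l < n + 1, with N = 2n+2 and m_{ijkl} = N/4 if i = l; N if (i = k < l) or (i < j = l); 3N/2 if i = j < k = l; 3N if exactly two consecutive (in the ordered quadruple) are equal in the patterns i = j < k < l, i < j = k < l, or i < j < k = l; and 6N if i < j < k < l. Terms with non-integer indices are 0. -/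
/-- `Q_n = (1/(2n+1)) * binomial(3n, n)`, the number of quadrangulations of a
`(2n+2)`-gon. -/
def quadCatalan (n : ℕ) : ℕ := (3 * n).choose n / (2 * n + 1)

/-- `Q_{(i-1)/2}`, with the convention that it is `0` when `i` is even
(i.e. when `(i-1)/2` is not an integer). -/
def quadCatalanHalf (i : ℕ) : ℕ := if i % 2 = 1 then quadCatalan ((i - 1) / 2) else 0

/-! The generating function `T` of the numbers `Q_n` satisfies `T = 1 + X * T ^ 3`. Let `H` be the
truncation of `T` to the coefficients `Q_a` with `2 * a < n`. As `(T - H) ^ 2` contributes nothing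
in the relevant degrees, `H ^ 4` may be replaced there by its linearization at `T`, and
`X * T ^ 3 = T - 1` turns `X * H ^ 4` into a combination of `T ^ 2`, `T` and `T * H`. Pairing the
terms `(a, b)` and `(b, a)` expresses the coefficient of `T * H` by that of `T ^ 2` and the diagonal
term `Q_{n/2} ^ 2`, while the coefficient of `T ^ 2` is a known multiple of `Q_n`. On the other
side, the multinomial theorem writes the coefficient of `X * H ^ 4` as a sum over sorted quadruples,
each weighted by its number of distinct rearrangements. -/

/-- The Raney number `r / (p * n + r) * (p * n + r).choose n`, which counts the ordered forests of
`r` `p`-ary trees with `n` internal nodes in total: the last tree is either a leaf, or an internal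
node whose removal leaves its `p` subtrees. For `r = 1` this is a Fuss-Catalan number. -/
def raney (p : ℕ) : ℕ → ℕ → ℕ
  | 0, _ => 1
  | _ + 1, 0 => 0
  | n + 1, r + 1 => raney p (n + 1) r + raney p n (r + p)
termination_by n r => (n, r)

section ClosedForm

theorem raney_zero_left (p r : ℕ) : raney p 0 r = 1 := by rw [raney]

theorem raney_succ_zero (p n : ℕ) : raney p (n + 1) 0 = 0 := by rw [raney]

theorem raney_succ_succ (p n r : ℕ) :
    raney p (n + 1) (r + 1) = raney p (n + 1) r + raney p n (r + p) := by rw [raney]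

theorem mul_raney (d n r : ℕ) :
    ((d + 1) * n + r) * raney (d + 1) n r = r * ((d + 1) * n + r).choose n := by
  induction n generalizing r with
  | zero => simp [raney_zero_left]
  | succ n ihn =>
    induction r with
    | zero => simp [raney_succ_zero]
    | succ r ihr =>
      have ih := ihn (r + (d + 1))
      obtain ⟨m, hm⟩ : ∃ m, (d + 1) * (n + 1) + r = m + 1 := ⟨(d + 1) * n + d + r, by ring⟩
      rw [show (d + 1) * n + (r + (d + 1)) = m + 1 by rw [← hm]; ring] at ih
      rw [hm] at ihr
      rw [show (d + 1) * (n + 1) + (r + 1) = m + 1 + 1 by rw [← hm]; ring, raney_succ_succ]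
      have pascal := Nat.choose_succ_succ' (m + 1) n
      have absorption := Nat.add_one_mul_choose_eq (m + 1) n
      apply Nat.eq_of_mul_eq_mul_left m.add_one_pos
      zify at *
      rw [pascal] at absorption ⊢
      linear_combination (m + 2 : ℤ) * ihr + (m + 2 : ℤ) * ih + (d + 1 : ℤ) * absorption
        + ((m + 1).choose n + (m + 1).choose (n + 1) : ℤ) * hm

theorem mul_raney_one (d n : ℕ) :
    (d * n + 1) * raney (d + 1) n 1 = ((d + 1) * n).choose n := by
  have closed := mul_raney d n 1
  have absorption := Nat.choose_mul_succ_eq ((d + 1) * n) n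
  rw [show (d + 1) * n + 1 - n = d * n + 1 by grind] at absorption
  apply Nat.eq_of_mul_eq_mul_left ((d + 1) * n).add_one_pos
  linear_combination (d * n + 1) * closed - absorption

theorem mul_raney_two (d n : ℕ) :
    (d * n + 2) * raney (d + 1) n 2 = 2 * ((d + 1) * n + 1) * raney (d + 1) n 1 := by
  have closed₁ := mul_raney d n 1
  have closed₂ := mul_raney d n 2
  have absorption := Nat.choose_mul_succ_eq ((d + 1) * n + 1) n
  rw [show (d + 1) * n + 1 + 1 - n = d * n + 2 by grind] at absorption
  apply Nat.eq_of_mul_eq_mul_left ((d + 1) * n + 1).add_one_pos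
  linear_combination
    (d * n + 2) * closed₂ - 2 * absorption - 2 * ((d + 1) * n + 2) * closed₁

theorem quadCatalan_eq_raney (n : ℕ) : quadCatalan n = raney 3 n 1 := by
  rw [quadCatalan, ← mul_raney_one 2 n, Nat.mul_div_cancel_left _ (2 * n).add_one_pos]

end ClosedForm

section GeneratingFunction

open PowerSeries

/-- The generating function of the Raney numbers `raney p n r` for fixed `p` and `r`. -/
def raneySeries (p r : ℕ) : ℤ⟦X⟧ := mk fun n => (raney p n r : ℤ)

@[simp]
theorem coeff_raneySeries (p r n : ℕ) : coeff n (raneySeries p r) = raney p n r :=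
  coeff_mk _ _

theorem raneySeries_zero (p : ℕ) : raneySeries p 0 = 1 := by
  ext n
  cases n <;> simp [raney_zero_left, raney_succ_zero, coeff_one]

theorem raneySeries_succ (p r : ℕ) :
    raneySeries p (r + 1) = raneySeries p r + X * raneySeries p (r + p) := by
  ext n
  cases n with
  | zero => simp [-coeff_zero_eq_constantCoeff, coeff_zero_X_mul, raney_zero_left]
  | succ n => simp [raney_succ_succ, coeff_succ_X_mul]

theorem raneySeries_mul (p r s : ℕ) :
    raneySeries p r * raneySeries p s = raneySeries p (r + s) := by
  ext n
  induction n generalizing r s with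
  | zero => simp [coeff_mul, raney_zero_left]
  | succ n ihn =>
    induction r with
    | zero => rw [raneySeries_zero, one_mul, zero_add]
    | succ r ihr =>
      rw [raneySeries_succ, add_mul, mul_assoc, map_add, ihr, coeff_succ_X_mul, ihn,
        add_right_comm r 1 s, raneySeries_succ, map_add, coeff_succ_X_mul, add_right_comm r p s]

theorem raneySeries_one_pow (p r : ℕ) : raneySeries p 1 ^ r = raneySeries p r := by
  induction r with
  | zero => rw [pow_zero, raneySeries_zero]
  | succ r ih => rw [pow_succ, ih, raneySeries_mul]

theorem raneySeries_one_eq (p : ℕ) : raneySeries p 1 = 1 + X * raneySeries p 1 ^ p := by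
  rw [raneySeries_one_pow, raneySeries_succ, raneySeries_zero, zero_add]

end GeneratingFunction

section Truncation

open PowerSeries
open Finset.HasAntidiagonal (antidiagonal mem_antidiagonal)

theorem sq_sub_dvd_pow_sub_linearization {R : Type*} [CommRing R] (x y : R) (k : ℕ) :
    (x - y) ^ 2 ∣ y ^ (k + 1) + k * x ^ (k + 1) - (k + 1) * (x ^ k * y) := by
  obtain ⟨c, hc⟩ := Polynomial.powAddExpansion x (y - x) (k + 1)
  rw [add_sub_cancel, Nat.add_sub_cancel, Nat.cast_succ] at hc
  exact ⟨c, by linear_combination hc⟩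

theorem X_pow_dvd_sub_trunc {R : Type*} [CommRing R] (m : ℕ) (f : R⟦X⟧) :
    X ^ m ∣ f - (trunc m f : R⟦X⟧) :=
  ⟨_, sub_eq_of_eq_add (eq_X_pow_mul_shift_add_trunc m f)⟩

theorem sum_antidiagonal_ite_eq {M : Type*} [AddCommMonoid M] (F : ℕ → ℕ → M) (n : ℕ) :
    ∑ ij ∈ antidiagonal n, (if ij.1 = ij.2 then F ij.1 ij.2 else 0) =
      if Even n then F (n / 2) (n / 2) else 0 := by
  split_ifs with hn
  · rw [Finset.sum_eq_single_of_mem (n / 2, n / 2)]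
    · rw [if_pos rfl]
    · grind [mem_antidiagonal]
    · rintro ⟨i, j⟩ hij hne
      rw [mem_antidiagonal] at hij
      exact if_neg (by grind)
  · refine Finset.sum_eq_zero fun ij hij => if_neg ?_
    rw [mem_antidiagonal] at hij
    grind

theorem coeff_sq_eq_two_mul_coeff_mul_trunc {R : Type*} [CommSemiring R] (f : R⟦X⟧) (n : ℕ) :
    coeff n (f ^ 2) = 2 * coeff n (f * (trunc ((n + 1) / 2) f : R⟦X⟧)) +
      if Even n then coeff (n / 2) f ^ 2 else 0 := by
  rw [sq, sq, coeff_mul, coeff_mul, two_mul,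
    ← sum_antidiagonal_ite_eq fun i j => coeff i f * coeff j f]
  nth_rewrite 3 [← Finset.Nat.sum_antidiagonal_swap]
  rw [← Finset.sum_add_distrib, ← Finset.sum_add_distrib]
  refine Finset.sum_congr rfl fun ij hij => ?_
  rw [mem_antidiagonal] at hij
  simp only [Prod.fst_swap, Prod.snd_swap, Polynomial.coeff_coe, coeff_trunc]
  split_ifs <;> grind

theorem coeff_X_mul_trunc_pow {R : Type*} [CommRing R] {f : R⟦X⟧} {p : ℕ}
    (hf : f = 1 + X * f ^ p) (n : ℕ) :
    2 * coeff n (X * (trunc ((n + 1) / 2) f : R⟦X⟧) ^ (p + 1)) + (p - 1) * coeff n (f ^ 2) +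
      (p + 1) * (if Even n then coeff (n / 2) f ^ 2 else 0) = 2 * p * coeff n f := by
  have pairing := coeff_sq_eq_two_mul_coeff_mul_trunc f n
  set m := (n + 1) / 2
  set H : R⟦X⟧ := (trunc m f : R⟦X⟧) with hH
  have coeff_H : coeff n H = 0 := by
    rw [hH, Polynomial.coeff_coe, coeff_trunc, if_neg (by omega)]
  have X_pow_dvd : X ^ (n + 1) ∣
      X * (H ^ (p + 1) + (p : R⟦X⟧) * f ^ (p + 1) - ((p : R⟦X⟧) + 1) * (f ^ p * H)) := by
    refine (pow_dvd_pow X (show n + 1 ≤ m * 2 + 1 by omega)).trans ?_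
    rw [pow_succ', pow_mul]
    exact mul_dvd_mul_left X ((pow_dvd_pow_of_dvd (X_pow_dvd_sub_trunc m f) 2).trans
      (sq_sub_dvd_pow_sub_linearization f H p))
  have X_mul_linearization :
      X * (H ^ (p + 1) + (p : R⟦X⟧) * f ^ (p + 1) - ((p : R⟦X⟧) + 1) * (f ^ p * H)) =
        X * H ^ (p + 1) + p • (f ^ 2 - f) - (p + 1) • (f * H - H) := by
    push_cast [nsmul_eq_mul]
    linear_combination ((p + 1) * H - p * f) * hf
  have coeff_linearization := X_pow_dvd_iff.mp X_pow_dvd n n.lt_succ_self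
  rw [X_mul_linearization] at coeff_linearization
  simp only [map_add, map_sub, map_nsmul, coeff_H] at coeff_linearization
  push_cast [nsmul_eq_mul] at coeff_linearization
  linear_combination 2 * coeff_linearization - (p + 1) * pairing

end Truncation

section CentralRecursion

open PowerSeries

theorem raney_central_recursion (d n : ℕ) :
    2 * (d + 2) * (raney (d + 1) n 1 : ℤ) =
      (d + 2) * (d * n + 2) * (if Even n then (raney (d + 1) (n / 2) 1 : ℤ) ^ 2 else 0) +
      2 * (d * n + 2) *
        coeff n (X * (trunc ((n + 1) / 2) (raneySeries (d + 1) 1) : ℤ⟦X⟧) ^ (d + 2)) := by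
  have recursion := coeff_X_mul_trunc_pow (raneySeries_one_eq (d + 1)) n
  have ratio : (d * n + 2 : ℤ) * raney (d + 1) n 2 = 2 * ((d + 1) * n + 1) * raney (d + 1) n 1 :=
    mod_cast mul_raney_two d n
  simp only [raneySeries_one_pow, coeff_raneySeries] at recursion
  push_cast at recursion
  linear_combination (d : ℤ) * ratio - (d * n + 2 : ℤ) * recursion

end CentralRecursion

section SortedQuadruples

variable {α M R : Type*} [LinearOrder α] [AddCommMonoid M] [CommSemiring R]

theorem sum_sym_four (s : Finset α) (F : Multiset α → M) :
    ∑ z ∈ s.sym 4, F z = ∑ t ∈ s ×ˢ s ×ˢ s ×ˢ s with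
      t.1 ≤ t.2.1 ∧ t.2.1 ≤ t.2.2.1 ∧ t.2.2.1 ≤ t.2.2.2, F {t.1, t.2.1, t.2.2.1, t.2.2.2} := by
  symm
  refine Finset.sum_nbij (fun t => t.1 ::ₛ t.2.1 ::ₛ t.2.2.1 ::ₛ t.2.2.2 ::ₛ .nil)
    ?_ ?_ ?_ (fun _ _ => rfl)
  · rintro ⟨a, b, c, d⟩ h
    simp only [Finset.mem_filter, Finset.mem_product] at h
    rw [Finset.mem_sym_iff]
    simp [h]
  · rintro ⟨a, b, c, d⟩ h ⟨a', b', c', d'⟩ h' heq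
    have perm : [a, b, c, d].Perm [a', b', c', d'] :=
      Multiset.coe_eq_coe.mp (congrArg Subtype.val heq)
    have lists_eq := perm.eq_of_pairwise' (r := (· ≤ ·)) (by grind) (by grind)
    simpa using lists_eq
  · intro z hz
    rw [Finset.mem_coe, Finset.mem_sym_iff] at hz
    have length_sort : ((z : Multiset α).sort (· ≤ ·)).length = 4 := by simp
    have sorted := (z : Multiset α).pairwise_sort (· ≤ ·)
    obtain ⟨a, b, c, d, hsort⟩ := List.length_eq_four.mp length_sort
    have z_eq : z = a ::ₛ b ::ₛ c ::ₛ d ::ₛ .nil :=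
      Sym.ext <| ((z : Multiset α).sort_eq (· ≤ ·)).symm.trans <| by rw [hsort]; rfl
    rw [hsort] at sorted
    subst z_eq
    refine ⟨(a, b, c, d), ?_, rfl⟩
    simp_all

theorem countPerms_quadruple {a b c d : α} (hab : a ≤ b) (hbc : b ≤ c) (hcd : c ≤ d) :
    ({a, b, c, d} : Multiset α).countPerms =
      if a = d then 1
      else if a = c ∨ b = d then 4
      else if a = b ∧ c = d then 6
      else if a = b ∨ b = c ∨ c = d then 12
      else 24 := by
  rw [Multiset.countPerms_filter_ne a, Multiset.countPerms_filter_ne b,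
    Multiset.countPerms_filter_ne c, Multiset.countPerms_filter_ne d]
  rcases hab.eq_or_lt with rfl | hab <;> rcases hbc.eq_or_lt with rfl | hbc <;>
    rcases hcd.eq_or_lt with rfl | hcd <;>
    simp (maxDischargeDepth := 4) [Multiset.insert_eq_cons, Multiset.filter_singleton, ne_of_lt,
      ne_of_gt, hab, hbc, hcd, hab.trans, hbc.trans, Nat.choose]

open Polynomial

theorem prod_map_monomial (a : ℕ → R) (z : Multiset ℕ) :
    (z.map fun i => monomial i (a i)).prod = monomial z.sum (z.map a).prod := by
  induction z using Multiset.induction with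
  | empty => simp
  | cons i z ih => simp [ih, monomial_mul_monomial]

theorem coeff_sum_monomial_pow (s : Finset ℕ) (a : ℕ → R) (k N : ℕ) :
    ((∑ i ∈ s, monomial i (a i)) ^ k).coeff N =
      ∑ z ∈ s.sym k, if (z : Multiset ℕ).sum = N then
        ((z : Multiset ℕ).countPerms : R) * ((z : Multiset ℕ).map a).prod else 0 := by
  simp only [Finset.sum_pow, finsetSum_coeff, prod_map_monomial, coeff_natCast_mul,
    coeff_monomial, mul_ite, mul_zero]
  rfl

/-- The multiplicity `m_{ijkl}` of the sorted quadruple `i ≤ j ≤ k ≤ l`, for an `N`-gon. The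
truncated divisions are exact when `i + j + k + l = N`. -/
def centralMultiplicity (N i j k l : ℕ) : ℕ :=
  if i = l then N / 4
  else if i = k ∨ j = l then N
  else if i = j ∧ k = l then 3 * N / 2
  else if i = j ∨ j = k ∨ k = l then 3 * N
  else 6 * N

theorem four_mul_centralMultiplicity {i j k l : ℕ} (hij : i ≤ j) (hjk : j ≤ k) (hkl : k ≤ l) :
    4 * centralMultiplicity (i + j + k + l) i j k l =
      (i + j + k + l) * ({i, j, k, l} : Multiset ℕ).countPerms := by
  rw [countPerms_quadruple hij hjk hkl, centralMultiplicity]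
  split_ifs <;> omega

theorem mul_coeff_sum_monomial_pow_four (s : Finset ℕ) (a : ℕ → R) (N : ℕ) :
    N * ((∑ i ∈ s, monomial i (a i)) ^ 4).coeff N =
      4 * ∑ t ∈ s ×ˢ s ×ˢ s ×ˢ s with t.1 + t.2.1 + t.2.2.1 + t.2.2.2 = N ∧
          t.1 ≤ t.2.1 ∧ t.2.1 ≤ t.2.2.1 ∧ t.2.2.1 ≤ t.2.2.2,
        centralMultiplicity N t.1 t.2.1 t.2.2.1 t.2.2.2 *
          (a t.1 * a t.2.1 * a t.2.2.1 * a t.2.2.2) := by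
  rw [coeff_sum_monomial_pow, sum_sym_four s fun z =>
    if z.sum = N then (z.countPerms : R) * (z.map a).prod else 0,
    ← Finset.filter_filter (fun t : ℕ × ℕ × ℕ × ℕ => t.1 + t.2.1 + t.2.2.1 + t.2.2.2 = N),
    Finset.filter_comm, Finset.sum_filter (fun t => _ = N), Finset.mul_sum, Finset.mul_sum]
  refine Finset.sum_congr rfl fun ⟨i, j, k, l⟩ ht => ?_
  obtain ⟨-, hij, hjk, hkl⟩ := Finset.mem_filter.mp ht
  simp only [Multiset.insert_eq_cons, Multiset.sum_cons, Multiset.sum_singleton, Multiset.map_cons,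
    Multiset.map_singleton, Multiset.prod_cons, Multiset.prod_singleton, ← add_assoc, ← mul_assoc]
  split_ifs with hN
  · subst hN
    have cast_eq := congrArg (Nat.cast (R := R)) (four_mul_centralMultiplicity hij hjk hkl)
    push_cast [Multiset.insert_eq_cons] at cast_eq ⊢
    simp only [← mul_assoc, cast_eq]
  · simp

end SortedQuadruples

section Quadrangulations

open Polynomial

theorem sum_monomial_quadCatalanHalf (n : ℕ) :
    ∑ i ∈ Finset.Icc 1 n, monomial i (quadCatalanHalf i : ℤ) =
      X * expand ℤ 2 (PowerSeries.trunc ((n + 1) / 2) (raneySeries 3 1)) := by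
  ext i
  simp only [finsetSum_coeff, coeff_monomial, Finset.sum_ite_eq', Finset.mem_Icc]
  cases i with
  | zero => simp
  | succ i =>
    rw [coeff_X_mul, coeff_expand two_pos, PowerSeries.coeff_trunc, coeff_raneySeries,
      ← quadCatalan_eq_raney, quadCatalanHalf, Nat.add_sub_cancel]
    grind

theorem coeff_X_mul_expand_two_pow_four {R : Type*} [CommSemiring R] (f : R[X]) (n : ℕ) :
    ((X * expand R 2 f) ^ 4).coeff (2 * n + 2) = (X * f ^ 4).coeff n := by
  have factor : (X * expand R 2 f) ^ 4 = X ^ 2 * expand R 2 (X * f ^ 4) := by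
    rw [map_mul, map_pow, expand_X]
    ring
  rw [factor, coeff_X_pow_mul, mul_comm 2 n, coeff_expand_mul two_pos]

theorem quadCatalan_central_recursion_coeff (n : ℕ) :
    4 * (quadCatalan n : ℤ) =
      4 * (n + 1) * (if Even n then (quadCatalan (n / 2) : ℤ) ^ 2 else 0) +
      (2 * n + 2) *
        ((∑ i ∈ Finset.Icc 1 n, monomial i (quadCatalanHalf i : ℤ)) ^ 4).coeff (2 * n + 2) := by
  have recursion := raney_central_recursion 2 n
  rw [sum_monomial_quadCatalanHalf, coeff_X_mul_expand_two_pow_four, ← coeff_coe]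
  push_cast [quadCatalan_eq_raney] at recursion ⊢
  linarith

theorem filter_Icc_sorted_eq_filter_lt (n : ℕ) :
    (Finset.Icc 1 n ×ˢ Finset.Icc 1 n ×ˢ Finset.Icc 1 n ×ˢ Finset.Icc 1 n).filter
        (fun t => t.1 + t.2.1 + t.2.2.1 + t.2.2.2 = 2 * n + 2 ∧
          t.1 ≤ t.2.1 ∧ t.2.1 ≤ t.2.2.1 ∧ t.2.2.1 ≤ t.2.2.2) =
      (Finset.Icc 1 (2 * n + 2) ×ˢ Finset.Icc 1 (2 * n + 2) ×ˢ
          Finset.Icc 1 (2 * n + 2) ×ˢ Finset.Icc 1 (2 * n + 2)).filter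
        (fun t => t.1 + t.2.1 + t.2.2.1 + t.2.2.2 = 2 * n + 2 ∧
          t.1 ≤ t.2.1 ∧ t.2.1 ≤ t.2.2.1 ∧ t.2.2.1 ≤ t.2.2.2 ∧ t.2.2.2 < n + 1) := by
  ext t
  simp only [Finset.mem_filter, Finset.mem_product, Finset.mem_Icc]
  omega

end Quadrangulations

/-- The central-component recursion for quadrangulations: for `n ≥ 2`,
`Q_n = (n+1) Q_{n/2}^2 + ∑ m_{ijkl} Q_{(i-1)/2} Q_{(j-1)/2} Q_{(k-1)/2} Q_{(l-1)/2}`,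
summed over `i + j + k + l = 2n + 2`, `i ≤ j ≤ k ≤ l < n + 1`, with `N = 2n + 2` and
`m_{ijkl} = N/4` if `i = l`; `N` if `i = k < l` or `i < j = l`; `3N/2` if `i = j < k = l`;
`3N` if `i = j < k < l`, `i < j = k < l`, or `i < j < k = l`; and `6N` if `i < j < k < l`.
The first term is `0` when `n` is odd. -/
theorem quadCatalan_central_recursion (n : ℕ) (hn : 2 ≤ n) :
    quadCatalan n =
      (if n % 2 = 0 then (n + 1) * quadCatalan (n / 2) ^ 2 else 0) +
      ∑ t ∈ (Finset.Icc 1 (2 * n + 2) ×ˢ Finset.Icc 1 (2 * n + 2) ×ˢ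
            Finset.Icc 1 (2 * n + 2) ×ˢ Finset.Icc 1 (2 * n + 2)).filter
          (fun t => t.1 + t.2.1 + t.2.2.1 + t.2.2.2 = 2 * n + 2 ∧
            t.1 ≤ t.2.1 ∧ t.2.1 ≤ t.2.2.1 ∧ t.2.2.1 ≤ t.2.2.2 ∧ t.2.2.2 < n + 1),
        (if t.1 = t.2.2.2 then (2 * n + 2) / 4
          else if t.1 = t.2.2.1 ∨ t.2.1 = t.2.2.2 then 2 * n + 2
          else if t.1 = t.2.1 ∧ t.2.2.1 = t.2.2.2 then 3 * (2 * n + 2) / 2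
          else if t.1 = t.2.1 ∨ t.2.1 = t.2.2.1 ∨ t.2.2.1 = t.2.2.2 then 3 * (2 * n + 2)
          else 6 * (2 * n + 2)) *
          (quadCatalanHalf t.1 * quadCatalanHalf t.2.1 *
            quadCatalanHalf t.2.2.1 * quadCatalanHalf t.2.2.2) := by
  have recursion := quadCatalan_central_recursion_coeff n
  have expansion := mul_coeff_sum_monomial_pow_four (Finset.Icc 1 n)
    (fun i => (quadCatalanHalf i : ℤ)) (2 * n + 2)
  rw [filter_Icc_sorted_eq_filter_lt] at expansion
  change _ = _ + ∑ t ∈ (_ : Finset (ℕ × ℕ × ℕ × ℕ)),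
    centralMultiplicity (2 * n + 2) t.1 t.2.1 t.2.2.1 t.2.2.2 * _
  apply Nat.cast_injective (R := ℤ)
  push_cast [← Nat.even_iff] at expansion ⊢
  rw [expansion] at recursion
  split_ifs at recursion ⊢ <;> linarith
end
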